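/- arXiv:2506.03853 — 3 statements merged into one kernel-verified Lean document; each statement's English description precedes it below -/
import Mathlib

section
/- Let (T, l) be a labeled tree, i.e., a tree T together with a labeling l : V(T) → ℝ≥0. The mapping d_l is an ultrametric on the set V(T) if and only if the inequality max{l(u), l(v)} > 0 holds for every edge {u, v} ∈ E(T). -/
open SimpleGraph

/-- For a tree `G` with labeling `l`, the "ultrametric" `d_l`: the maximum of the labels of the
vertices of the unique path joining `u` and `v` (and `0` if `u = v`). -/
noncomputable def treeDist {V : Type*} (G : SimpleGraph V) (hG : G.IsTree) (l : V → NNReal)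
    (u v : V) : NNReal :=
  letI := Classical.decEq V
  if u = v then 0 else ((hG.existsUnique_path u v).choose.support.map l).foldr max 0

/-- A labeling is non-degenerate if `max {l u, l v} > 0` for every edge `{u, v}`. -/
def Nondeg {V : Type*} (G : SimpleGraph V) (l : V → NNReal) : Prop :=
  ∀ u v : V, G.Adj u v → 0 < max (l u) (l v)

/-- A distance function is separable if there is a countable dense subset. -/
def SeparableWith {α : Type*} (d : α → α → NNReal) : Prop :=
  ∃ S : Set α, S.Countable ∧ ∀ x : α, ∀ ε : NNReal, 0 < ε → ∃ s ∈ S, d x s < ε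

/-- A set is bounded if it is contained in a closed ball of positive radius. -/
def BoundedWith {α : Type*} (d : α → α → NNReal) (A : Set α) : Prop :=
  ∃ c : α, ∃ r : NNReal, 0 < r ∧ ∀ x ∈ A, d c x ≤ r

/-- A distance function is locally finite if every bounded set is finite. -/
def LocallyFiniteWith {α : Type*} (d : α → α → NNReal) : Prop :=
  ∀ A : Set α, BoundedWith d A → A.Finite

/-- A graph is a ray if its vertices can be enumerated without repetition as
`x₁, x₂, …` with edges exactly `{xₙ, xₙ₊₁}`. -/
def IsRay {W : Type*} (R : SimpleGraph W) : Prop :=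
  ∃ v : ℕ → W, Function.Bijective v ∧
    ∀ a b : W, R.Adj a b ↔ ∃ n : ℕ, (a = v n ∧ b = v (n + 1)) ∨ (a = v (n + 1) ∧ b = v n)

/-- A tree is a star graph if some vertex `c` (the center) is adjacent to every other vertex. -/
def IsStar {W : Type*} (S : SimpleGraph W) : Prop :=
  S.IsTree ∧ ∃ c : W, ∀ v : W, v ≠ c → S.Adj c v

/-!
For each threshold `c`, keep only the edges of the tree both of whose endpoints have label at most
`c`. The inequality `d_l(x, y) ≤ c` says exactly that `x` and `y` are connected in the resulting
graph. Connectedness is an equivalence relation at every threshold, so `d_l` is always symmetric and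
satisfies the strong triangle inequality. It separates points if and only if no edge survives at
threshold `0`, which is the non-degeneracy of `l`.
-/

theorem foldr_max_le_iff {α : Type*} [LinearOrder α] {L : List α} {b c : α} :
    L.foldr max b ≤ c ↔ b ≤ c ∧ ∀ a ∈ L, a ≤ c := by
  induction L with
  | nil => simp
  | cons a L ih => simp [ih, and_left_comm]

theorem forall_reachable_iff_eq_iff_eq_bot {V : Type*} {G : SimpleGraph V} :
    (∀ x y, G.Reachable x y ↔ x = y) ↔ G = ⊥ := by
  constructor
  · intro h
    exact eq_bot_iff_forall_not_adj.mpr fun x y hxy ↦ hxy.ne ((h x y).mp hxy.reachable)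
  · rintro rfl x y
    exact reachable_bot

section SublevelGraph

variable {V α : Type*} {G : SimpleGraph V} {l : V → α} {c : α} {x y : V}

/-- The sublevel graph of a vertex labeling `l` at threshold `c`: the edges of `G` whose endpoints
both have label at most `c`. Its connected components are the closed balls of radius `c` for `d_l`.
All vertices are kept, those with label above `c` being isolated, so that reachability is reflexive
on the whole vertex type and matches the convention `d_l(u, u) = 0`. -/
def sublevelGraph [LE α] (G : SimpleGraph V) (l : V → α) (c : α) : SimpleGraph V where
  Adj u v := G.Adj u v ∧ l u ≤ c ∧ l v ≤ c
  symm := ⟨fun _ _ h ↦ ⟨h.1.symm, h.2.2, h.2.1⟩⟩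
  loopless := ⟨fun _ h ↦ h.1.ne rfl⟩

theorem sublevelGraph_le [LE α] : sublevelGraph G l c ≤ G :=
  fun _ _ h ↦ h.1

theorem reachable_sublevelGraph_of_forall_mem_support_le [LE α] (p : G.Walk x y)
    (hp : ∀ w ∈ p.support, l w ≤ c) : (sublevelGraph G l c).Reachable x y := by
  refine ⟨p.transfer _ fun e he ↦ ?_⟩
  induction e with
  | h u v =>
    exact ⟨p.adj_of_mem_edges he, hp u (p.fst_mem_support_of_mem_edges he),
      hp v (p.snd_mem_support_of_mem_edges he)⟩

theorem le_of_mem_support_sublevelGraph_walk [LE α] (p : (sublevelGraph G l c).Walk x y)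
    (hxy : x ≠ y) {w : V} (hw : w ∈ p.support) : l w ≤ c := by
  obtain ⟨e, he, hwe⟩ :=
    (Walk.mem_support_iff_exists_mem_edges_of_not_nil (Walk.not_nil_of_ne hxy)).mp hw
  obtain ⟨v, rfl⟩ := hwe
  exact (p.adj_of_mem_edges he).2.1

end SublevelGraph

theorem nondeg_iff_sublevelGraph_zero_eq_bot {V : Type*} {G : SimpleGraph V} {l : V → NNReal} :
    Nondeg G l ↔ sublevelGraph G l 0 = ⊥ := by
  simp only [Nondeg, eq_bot_iff_forall_not_adj, sublevelGraph, not_and, ← max_le_iff, not_le]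

section TreeDist

variable {V : Type*} {G : SimpleGraph V} (hG : G.IsTree) (l : V → NNReal)

theorem treeDist_le_iff_forall_mem_support {x y : V} (hxy : x ≠ y) {p : G.Walk x y}
    (hp : p.IsPath) {c : NNReal} : treeDist G hG l x y ≤ c ↔ ∀ w ∈ p.support, l w ≤ c := by
  have path_eq : (hG.existsUnique_path x y).choose = p :=
    ((hG.existsUnique_path x y).choose_spec.2 p hp).symm
  simp [treeDist, hxy, path_eq, foldr_max_le_iff]

theorem treeDist_le_iff_reachable {x y : V} {c : NNReal} :
    treeDist G hG l x y ≤ c ↔ (sublevelGraph G l c).Reachable x y := by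
  obtain rfl | hxy := eq_or_ne x y
  · simp [treeDist]
  constructor
  · intro h
    obtain ⟨p, hp⟩ := hG.connected.exists_isPath x y
    exact reachable_sublevelGraph_of_forall_mem_support_le p
      ((treeDist_le_iff_forall_mem_support hG l hxy hp).mp h)
  · intro h
    obtain ⟨p, hp⟩ := h.exists_isPath
    rw [treeDist_le_iff_forall_mem_support hG l hxy (hp.mapLe sublevelGraph_le)]
    intro w hw
    exact le_of_mem_support_sublevelGraph_walk p hxy (by simpa using hw)

theorem treeDist_comm (x y : V) : treeDist G hG l x y = treeDist G hG l y x :=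
  eq_of_forall_ge_iff fun c ↦ by simp only [treeDist_le_iff_reachable, reachable_comm]

theorem treeDist_le_max (x y z : V) :
    treeDist G hG l x y ≤ max (treeDist G hG l x z) (treeDist G hG l z y) := by
  set c := max (treeDist G hG l x z) (treeDist G hG l z y)
  have hxz : (sublevelGraph G l c).Reachable x z :=
    (treeDist_le_iff_reachable hG l).mp (le_max_left _ _)
  have hzy : (sublevelGraph G l c).Reachable z y :=
    (treeDist_le_iff_reachable hG l).mp (le_max_right _ _)
  exact (treeDist_le_iff_reachable hG l).mpr (hxz.trans hzy)

theorem forall_treeDist_eq_zero_iff_eq_iff_nondeg :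
    (∀ x y, treeDist G hG l x y = 0 ↔ x = y) ↔ Nondeg G l := by
  simp only [← nonpos_iff_eq_zero, treeDist_le_iff_reachable,
    forall_reachable_iff_eq_iff_eq_bot, nondeg_iff_sublevelGraph_zero_eq_bot]

end TreeDist

theorem treeDist_isUltrametric_iff_nondeg {V : Type*} (G : SimpleGraph V) (hG : G.IsTree)
    (l : V → NNReal) :
    ((∀ x y : V, treeDist G hG l x y = treeDist G hG l y x) ∧
      (∀ x y : V, treeDist G hG l x y = 0 ↔ x = y) ∧
      (∀ x y z : V,
        treeDist G hG l x y ≤ max (treeDist G hG l x z) (treeDist G hG l z y))) ↔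
    Nondeg G l := by
  rw [← forall_treeDist_eq_zero_iff_eq_iff_nondeg hG l]
  constructor
  · rintro ⟨-, separates, -⟩
    exact separates
  · intro separates
    exact ⟨treeDist_comm hG l, separates, treeDist_le_max hG l⟩
end

section
/- Let T be a tree. Then the following statements are equivalent: (i) the vertex set V(T) is countable; (ii) for every non-degenerate labeling l : V(T) → ℝ≥0, the ultrametric space (V(T), d_l) is separable; (iii) there exists a non-degenerate labeling l : V(T) → ℝ≥0 such that (V(T), d_l) is a separable ultrametric space. -/
open SimpleGraph

/-!
A dense set `S` contains every vertex with a positive label, since `d_l u v ≥ l u` for `v ≠ u`. A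
vertex `x ∉ S` therefore has label `0`, so by non-degeneracy all its neighbors have positive labels
and lie in `S`. A path from `x` to a nearby point of `S` starts through a neighbor with a small
label, so `x` has neighbors with arbitrarily small positive labels, in particular two distinct ones.
In a tree two distinct vertices have at most one common neighbor, so a countable `S` leaves out at
most as many vertices as it has pairs of elements.
-/

/-- Density of `S` with respect to the distance function `d`: the condition that `SeparableWith`
imposes on its countable set. -/
def DenseWith {α : Type*} (d : α → α → NNReal) (S : Set α) : Prop :=
  ∀ x : α, ∀ ε : NNReal, 0 < ε → ∃ s ∈ S, d x s < ε

theorem separableWith_of_countable {α : Type*} [Countable α] {d : α → α → NNReal}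
    (hd : ∀ x, d x x = 0) : SeparableWith d :=
  ⟨Set.univ, Set.countable_univ, fun x _ hε => ⟨x, Set.mem_univ x, (hd x).trans_lt hε⟩⟩

section Graph

variable {V : Type*} {G : SimpleGraph V}

theorem nondeg_of_pos {l : V → NNReal} (hl : ∀ v, 0 < l v) : Nondeg G l :=
  fun u _ _ => lt_max_of_lt_left (hl u)

theorem subsingleton_commonNeighbors_of_isAcyclic (hG : G.IsAcyclic) {a b : V} (hab : a ≠ b) :
    (G.commonNeighbors a b).Subsingleton := by
  rintro x ⟨hax, hbx⟩ y ⟨hay, hby⟩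
  let pathVia (z : V) (haz : G.Adj a z) (hbz : G.Adj b z) : G.Path a b :=
    ⟨.cons haz (.cons hbz.symm .nil), by simp [Walk.cons_isPath_iff, haz.ne, hbz.ne', hab]⟩
  have same_path : pathVia x hax hbx = pathVia y hay hby :=
    (hG.subsingleton_path a b).elim _ _
  exact congrArg (fun p : G.Path a b => p.1.snd) same_path

theorem countable_setOf_nontrivial_neighborSet_inter (hG : G.IsAcyclic) {S : Set V}
    (hS : S.Countable) : {x | (G.neighborSet x ∩ S).Nontrivial}.Countable := by
  have countable_union : (⋃ p ∈ S.offDiag, G.commonNeighbors p.1 p.2).Countable :=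
    (hS.prod hS |>.mono S.offDiag_subset_prod).biUnion fun _ hp =>
      (subsingleton_commonNeighbors_of_isAcyclic hG hp.2.2).countable
  refine countable_union.mono ?_
  rintro x ⟨a, ⟨hxa, haS⟩, b, ⟨hxb, hbS⟩, hab⟩
  exact Set.mem_biUnion (x := (a, b)) ⟨haS, hbS, hab⟩ ⟨hxa.symm, hxb.symm⟩

end Graph

section TreeDist

variable {V : Type*} {G : SimpleGraph V} {hG : G.IsTree} {l : V → NNReal} {u v : V}

theorem treeDist_self (u : V) : treeDist G hG l u u = 0 :=
  if_pos rfl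

theorem le_treeDist_of_mem_support (huv : u ≠ v) {p : G.Walk u v} (hp : p.IsPath) {w : V}
    (hw : w ∈ p.support) : l w ≤ treeDist G hG l u v := by
  have path_eq : (hG.existsUnique_path u v).choose = p :=
    (hG.existsUnique_path u v).unique (hG.existsUnique_path u v).choose_spec.1 hp
  rw [treeDist, if_neg huv, path_eq]
  exact List.le_max_of_le (List.mem_map_of_mem hw) le_rfl

theorem label_le_treeDist (huv : u ≠ v) : l u ≤ treeDist G hG l u v :=
  have ⟨p, hp, _⟩ := hG.existsUnique_path u v
  le_treeDist_of_mem_support huv hp p.start_mem_support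

theorem exists_adj_label_le_treeDist (huv : u ≠ v) :
    ∃ w, G.Adj u w ∧ l w ≤ treeDist G hG l u v :=
  have ⟨p, hp, _⟩ := hG.existsUnique_path u v
  ⟨p.snd, p.adj_snd (Walk.not_nil_of_ne huv),
    le_treeDist_of_mem_support huv hp (p.getVert_mem_support 1)⟩

end TreeDist

namespace DenseWith

variable {V : Type*} {G : SimpleGraph V} {hG : G.IsTree} {l : V → NNReal} {S : Set V} {x : V}

theorem mem_of_label_pos (hS : DenseWith (treeDist G hG l) S) (hx : 0 < l x) : x ∈ S := by
  obtain ⟨s, hsS, hs⟩ := hS x (l x) hx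
  by_contra hxS
  exact hs.not_ge (label_le_treeDist (ne_of_mem_of_not_mem hsS hxS).symm)

theorem exists_adj_label_lt (hS : DenseWith (treeDist G hG l) S) (hx : x ∉ S) {ε : NNReal}
    (hε : 0 < ε) : ∃ y, G.Adj x y ∧ l y < ε := by
  obtain ⟨s, hsS, hs⟩ := hS x ε hε
  obtain ⟨y, hxy, hy⟩ := exists_adj_label_le_treeDist (ne_of_mem_of_not_mem hsS hx).symm
  exact ⟨y, hxy, hy.trans_lt hs⟩

theorem nontrivial_neighborSet_inter (hS : DenseWith (treeDist G hG l) S) (hl : Nondeg G l)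
    (hx : x ∉ S) : (G.neighborSet x ∩ S).Nontrivial := by
  have label_pos : ∀ y, G.Adj x y → 0 < l y := fun y hxy =>
    (lt_max_iff.1 (hl x y hxy)).resolve_left (mt hS.mem_of_label_pos hx)
  obtain ⟨a, hxa, -⟩ := hS.exists_adj_label_lt hx one_pos
  obtain ⟨b, hxb, hba⟩ := hS.exists_adj_label_lt hx (label_pos a hxa)
  exact ⟨a, ⟨hxa, hS.mem_of_label_pos (label_pos a hxa)⟩,
    b, ⟨hxb, hS.mem_of_label_pos (label_pos b hxb)⟩, fun hab => hba.ne' (congrArg l hab)⟩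

end DenseWith

theorem countable_of_separableWith_treeDist {V : Type*} {G : SimpleGraph V} {hG : G.IsTree}
    {l : V → NNReal} (hl : Nondeg G l) (hsep : SeparableWith (treeDist G hG l)) :
    Countable V := by
  obtain ⟨S, hS, hdense⟩ := hsep
  have hSc : Sᶜ.Countable :=
    (countable_setOf_nontrivial_neighborSet_inter hG.isAcyclic hS).mono fun _ hx =>
      DenseWith.nontrivial_neighborSet_inter hdense hl hx
  rw [← Set.countable_univ_iff, ← Set.union_compl_self S]
  exact hS.union hSc

theorem countable_iff_forall_separable_iff_exists_separable {V : Type*} (G : SimpleGraph V)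
    (hG : G.IsTree) :
    (Countable V ↔
      ∀ l : V → NNReal, Nondeg G l → SeparableWith (treeDist G hG l)) ∧
    (Countable V ↔
      ∃ l : V → NNReal, Nondeg G l ∧ SeparableWith (treeDist G hG l)) := by
  have separable (_ : Countable V) (l : V → NNReal) : SeparableWith (treeDist G hG l) :=
    separableWith_of_countable treeDist_self
  have nondeg_one : Nondeg G 1 := nondeg_of_pos fun _ => one_pos
  refine ⟨⟨fun hV l _ => separable hV l, fun hall => ?_⟩,
    ⟨fun hV => ⟨1, nondeg_one, separable hV 1⟩, ?_⟩⟩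
  · exact countable_of_separableWith_treeDist nondeg_one (hall 1 nondeg_one)
  · rintro ⟨l, hl, hsep⟩
    exact countable_of_separableWith_treeDist hl hsep
end

section
/- Let T be a tree. Then the following statements are equivalent: (i) the vertex set V(T) is countable; (ii) there exists a non-degenerate labeling l : V(T) → ℝ≥0 for which the ultrametric space (V(T), d_l) is locally finite. -/
open SimpleGraph

/-! Apart from its center, a ball of radius `r` contains only vertices of label at most `r`. An
injective labeling by positive integers therefore makes every ball finite. Conversely, the balls of
radius `n + 1` about a fixed point cover the space, whatever the distance function is. -/

open scoped NNReal

theorem LocallyFiniteWith.countable {α : Type*} {d : α → α → ℝ≥0} (hd : LocallyFiniteWith d) :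
    Countable α := by
  rcases isEmpty_or_nonempty α with _ | ⟨⟨c⟩⟩
  · infer_instance
  have closedBall_finite (n : ℕ) : {x | d c x ≤ n + 1}.Finite :=
    hd _ ⟨c, n + 1, by positivity, fun _ hx => hx⟩
  have iUnion_closedBall : ⋃ n : ℕ, {x | d c x ≤ n + 1} = Set.univ := by
    refine Set.iUnion_eq_univ_iff.2 fun x => ?_
    obtain ⟨n, hn⟩ := exists_nat_ge (d c x)
    exact ⟨n, hn.trans le_self_add⟩
  rw [← Set.countable_univ_iff, ← iUnion_closedBall]
  exact Set.countable_iUnion fun n => (closedBall_finite n).countable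

theorem exists_pos_forall_finite_setOf_le (α : Type*) [Countable α] :
    ∃ l : α → ℝ≥0, (∀ x, 0 < l x) ∧ ∀ r, {x | l x ≤ r}.Finite := by
  obtain ⟨f, hf⟩ := exists_injective_nat α
  refine ⟨fun x => f x + 1, fun x => by positivity, fun r => ?_⟩
  refine ((Set.finite_Iic ⌊r⌋₊).preimage hf.injOn).subset fun x hx => ?_
  exact Nat.le_floor (le_self_add.trans hx)

section Tree

variable {V : Type*} {G : SimpleGraph V} (hG : G.IsTree) (l : V → ℝ≥0) {u v w : V}

theorem label_le_treeDist_of_mem_support {p : G.Walk u v} (hp : p.IsPath) (huv : u ≠ v)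
    (hw : w ∈ p.support) : l w ≤ treeDist G hG l u v := by
  have p_eq : p = (hG.existsUnique_path u v).choose :=
    (hG.existsUnique_path u v).choose_spec.2 p hp
  rw [treeDist, if_neg huv, ← p_eq]
  exact List.le_max_of_le' 0 (List.mem_map_of_mem hw) le_rfl

theorem label_right_le_treeDist (huv : u ≠ v) : l v ≤ treeDist G hG l u v := by
  obtain ⟨p, hp, _⟩ := hG.existsUnique_path u v
  exact label_le_treeDist_of_mem_support hG l hp huv p.end_mem_support

variable {l}

theorem locallyFiniteWith_treeDist_of_forall_finite_setOf_le (hl : ∀ r, {v | l v ≤ r}.Finite) :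
    LocallyFiniteWith (treeDist G hG l) := by
  rintro A ⟨c, r, -, hA⟩
  refine ((hl r).insert c).subset fun x hx => or_iff_not_imp_left.2 fun hxc => ?_
  exact (label_right_le_treeDist hG l (Ne.symm hxc)).trans (hA x hx)

end Tree

theorem countable_iff_exists_locallyFinite {V : Type*} (G : SimpleGraph V)
    (hG : G.IsTree) :
    Countable V ↔
      ∃ l : V → NNReal, Nondeg G l ∧ LocallyFiniteWith (treeDist G hG l) := by
  refine ⟨fun _ => ?_, fun ⟨_, _, hl⟩ => hl.countable⟩
  obtain ⟨l, l_pos, l_finite⟩ := exists_pos_forall_finite_setOf_le V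
  exact ⟨l, fun u _ _ => lt_max_of_lt_left (l_pos u),
    locallyFiniteWith_treeDist_of_forall_finite_setOf_le hG l_finite⟩
end
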